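/- Let g : ℝⁿ → ℝ be a real trigonometric polynomial of degree ≤ 2r (1-periodic in each coordinate). Then for every integer s with s² > 6r² there exist a real number c and finitely many real trigonometric polynomials h₁, …, h_K of degree ≤ s such that g(x) − c = Σ_{k=1}^{K} h_k(x)² for all x ∈ ℝⁿ and (min_{x ∈ [0,1]ⁿ} g(x)) − c ≤ ‖g − ḡ‖_F · [(1 − 6r²/s²)^{−n} − 1]. -/

import Mathlib

open MeasureTheory

/-- `trigChar k z = exp(2πi⟨k, z⟩)`, the complex exponential with frequency `k ∈ ℤᵐ`. -/
noncomputable def trigChar {m : ℕ} (k : Fin m → ℤ) (z : Fin m → ℝ) : ℂ :=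
  Complex.exp (2 * (Real.pi : ℂ) * Complex.I * ∑ i, (k i : ℂ) * (z i : ℂ))

/-- `t : ℝᵐ → ℝ` is a real trigonometric polynomial of degree `≤ s`: a finite combination
`t(z) = Σ_{k ∈ ℤᵐ, ‖k‖_∞ ≤ s} c_k exp(2πi⟨k, z⟩)` that is real-valued (hence 1-periodic in
each coordinate). -/
def IsTrigPoly {m : ℕ} (s : ℕ) (t : (Fin m → ℝ) → ℝ) : Prop :=
  ∃ (S : Finset (Fin m → ℤ)) (c : (Fin m → ℤ) → ℂ),
    (∀ k ∈ S, ∀ i, |k i| ≤ (s : ℤ)) ∧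
    ∀ z, (t z : ℂ) = ∑ k ∈ S, c k * trigChar k z

/-- `fCoeff g k` is the `k`-th Fourier coefficient of the 1-periodic function `g : ℝᵐ → ℝ`. -/
noncomputable def fCoeff {m : ℕ} (g : (Fin m → ℝ) → ℝ) (k : Fin m → ℤ) : ℂ :=
  ∫ z in Set.Icc (0 : Fin m → ℝ) 1, (g z : ℂ) * trigChar (-k) z

/-- `Fnorm g = Σ_k |ĝ(k)|`, the ℓ¹ norm of the Fourier coefficients of `g`. -/
noncomputable def Fnorm {m : ℕ} (g : (Fin m → ℝ) → ℝ) : ℝ :=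
  ∑' k : Fin m → ℤ, ‖fCoeff g k‖

/-- The univariate exponential `t ↦ exp(2πi k t)`. -/
noncomputable def circleChar (k : ℤ) (t : ℝ) : ℂ :=
  Complex.exp (2 * (Real.pi : ℂ) * Complex.I * (k * t))

theorem trigChar_eq_prod {m : ℕ} (k : Fin m → ℤ) (z : Fin m → ℝ) :
    trigChar k z = ∏ i, circleChar (k i) (z i) := by
  simp only [trigChar, circleChar, Finset.mul_sum, Complex.exp_sum]

theorem circleChar_zero (t : ℝ) : circleChar 0 t = 1 := by
  simp [circleChar]

theorem circleChar_add (k l : ℤ) (t : ℝ) :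
    circleChar (k + l) t = circleChar k t * circleChar l t := by
  simp only [circleChar, ← Complex.exp_add]
  push_cast
  ring_nf

theorem circleChar_sub_right (k : ℤ) (t u : ℝ) :
    circleChar k (t - u) = circleChar k t * circleChar (-k) u := by
  simp only [circleChar, ← Complex.exp_add]
  push_cast
  ring_nf

theorem norm_circleChar (k : ℤ) (t : ℝ) : ‖circleChar k t‖ = 1 := by
  have h : 2 * (Real.pi : ℂ) * Complex.I * (k * t)
      = ((2 * Real.pi * (k * t) : ℝ) : ℂ) * Complex.I := by
    push_cast
    ring
  rw [circleChar, h, Complex.norm_exp_ofReal_mul_I]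

theorem conj_circleChar (k : ℤ) (t : ℝ) :
    (starRingEnd ℂ) (circleChar k t) = circleChar (-k) t := by
  simp [circleChar, ← Complex.exp_conj, Complex.conj_ofNat]

theorem norm_trigChar {m : ℕ} (k : Fin m → ℤ) (z : Fin m → ℝ) : ‖trigChar k z‖ = 1 := by
  simp [trigChar_eq_prod, norm_circleChar]

theorem trigChar_zero {m : ℕ} (z : Fin m → ℝ) : trigChar 0 z = 1 := by
  simp [trigChar]

theorem trigChar_add {m : ℕ} (k l : Fin m → ℤ) (z : Fin m → ℝ) :
    trigChar (k + l) z = trigChar k z * trigChar l z := by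
  simp [trigChar_eq_prod, circleChar_add, Finset.prod_mul_distrib]

theorem continuous_trigChar {m : ℕ} (k : Fin m → ℤ) : Continuous (trigChar k) := by
  unfold trigChar
  fun_prop

/-- Discrete orthogonality of characters on the grid `{0, 1/N, …, (N-1)/N}`. -/
theorem sum_circleChar_grid {N : ℕ} {m : ℤ} (hm : |m| < N) :
    ∑ j : Fin N, circleChar m (j / N : ℝ) = if m = 0 then (N : ℂ) else 0 := by
  split_ifs with h0
  · simp [h0, circleChar_zero]
  have hN : (N : ℂ) ≠ 0 := by
    have : (0 : ℤ) < N := (abs_nonneg m).trans_lt hm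
    exact_mod_cast this.ne'
  have hpow (j : ℕ) : circleChar m (j / N : ℝ) = circleChar m (1 / N : ℝ) ^ j := by
    rw [circleChar, circleChar, ← Complex.exp_nat_mul]
    push_cast
    ring_nf
  have hone : circleChar m (1 / N : ℝ) ≠ 1 := by
    intro h
    obtain ⟨l, hl⟩ := Complex.exp_eq_one_iff.1 h
    have hml : (m : ℂ) = l * N := by
      push_cast at hl
      field_simp at hl
      linear_combination hl
    have hml' : m = l * N := by exact_mod_cast hml
    exact h0 (Int.eq_zero_of_abs_lt_dvd ⟨l, by rw [hml', mul_comm]⟩ hm)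
  have hlast : circleChar m (1 / N : ℝ) ^ N = 1 := by
    rw [circleChar, ← Complex.exp_nat_mul, Complex.exp_eq_one_iff]
    refine ⟨m, ?_⟩
    push_cast
    field_simp
  rw [Fin.sum_univ_eq_sum_range (fun j : ℕ => circleChar m (j / N : ℝ)) N]
  simp only [hpow]
  rw [geom_sum_eq hone, hlast, sub_self, zero_div]

theorem setIntegral_circleChar (m : ℤ) :
    ∫ t in Set.Icc (0 : ℝ) 1, circleChar m t = if m = 0 then 1 else 0 := by
  rw [integral_Icc_eq_integral_Ioc, ← intervalIntegral.integral_of_le zero_le_one]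
  split_ifs with h0
  · simp [h0, circleChar_zero]
  have hc : 2 * (Real.pi : ℂ) * Complex.I * m ≠ 0 := by
    simp [h0, Real.pi_ne_zero]
  have h := integral_exp_mul_complex (a := 0) (b := 1) hc
  have he : Complex.exp (2 * (Real.pi : ℂ) * Complex.I * m) = 1 :=
    Complex.exp_eq_one_iff.2 ⟨m, by ring⟩
  simp only [circleChar, ← mul_assoc]
  rw [h]
  simp [he]

theorem setIntegral_trigChar {m : ℕ} (k : Fin m → ℤ) :
    ∫ z in Set.Icc (0 : Fin m → ℝ) 1, trigChar k z = if k = 0 then 1 else 0 := by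
  have hres : (volume : Measure (Fin m → ℝ)).restrict (Set.Icc 0 1)
      = Measure.pi fun _ => (volume : Measure ℝ).restrict (Set.Icc 0 1) := by
    rw [← Set.pi_univ_Icc, volume_pi, Measure.restrict_pi_pi]
    rfl
  simp only [trigChar_eq_prod]
  rw [hres, integral_fintype_prod_eq_prod (fun i t => circleChar (k i) t)]
  simp only [setIntegral_circleChar]
  by_cases h : k = 0
  · simp [h]
  · obtain ⟨i, hi⟩ := Function.ne_iff.1 h
    rw [if_neg h]
    exact Finset.prod_eq_zero (Finset.mem_univ i) (if_neg hi)

/-- The triangular (Fejér) weights `a ↦ (s - |a|)₊`. -/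
def triWeight (s : ℕ) (a : ℤ) : ℝ := max ((s : ℝ) - |(a : ℝ)|) 0

theorem triWeight_neg (s : ℕ) (a : ℤ) : triWeight s (-a) = triWeight s a := by
  simp [triWeight]

theorem triWeight_eq_zero {s : ℕ} {a : ℤ} (ha : a ∉ Finset.Icc (-(s : ℤ)) s) :
    triWeight s a = 0 := by
  have h : (s : ℤ) ≤ |a| := by
    by_contra! h
    exact ha (Finset.mem_Icc.2 (abs_le.1 h.le))
  have h' : (s : ℝ) ≤ |(a : ℝ)| := by exact_mod_cast h
  exact max_eq_right (by linarith)

/-- The autocorrelation of the triangular weights. -/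
noncomputable def triCorr (s : ℕ) (k : ℤ) : ℝ :=
  ∑ a ∈ Finset.Icc (-(s : ℤ)) s, triWeight s a * triWeight s (k - a)

theorem triCorr_zero (s : ℕ) : triCorr s 0 = (2 * (s : ℝ) ^ 3 + s) / 3 := by
  have h0 (a : ℤ) (ha : a ∈ Finset.Icc (-(s : ℤ)) s) :
      triWeight s a * triWeight s (0 - a) = ((s : ℝ) - |(a : ℝ)|) ^ 2 := by
    have ha' : |(a : ℝ)| ≤ s := by exact_mod_cast abs_le.2 (Finset.mem_Icc.1 ha)
    rw [zero_sub, triWeight_neg, triWeight, max_eq_left (by linarith), sq]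
  have hind (c : ℝ) (m : ℕ) : ∑ a ∈ Finset.Icc (-(m : ℤ)) m, (c - |(a : ℝ)|) ^ 2
      = c ^ 2 + 2 * m * c ^ 2 - 2 * c * m * (m + 1) + m * (m + 1) * (2 * m + 1) / 3 := by
    induction m with
    | zero => simp
    | succ m ih =>
      have hI : Finset.Icc (-((m + 1 : ℕ) : ℤ)) (m + 1 : ℕ)
          = insert (-((m : ℤ) + 1)) (insert ((m : ℤ) + 1) (Finset.Icc (-(m : ℤ)) m)) := by
        ext a
        simp only [Finset.mem_Icc, Finset.mem_insert]
        omega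
      have hpos : |(m : ℝ) + 1| = m + 1 := abs_of_nonneg (by positivity)
      rw [hI, Finset.sum_insert (by simp only [Finset.mem_Icc, Finset.mem_insert]; omega),
        Finset.sum_insert (by simp), ih]
      push_cast
      rw [abs_neg, hpos]
      ring
  rw [triCorr, Finset.sum_congr rfl h0, hind]
  ring

theorem hasSum_triCorr (s : ℕ) (k : ℤ) :
    HasSum (fun a => triWeight s a * triWeight s (a + k)) (triCorr s k) := by
  have h : HasSum (fun a => triWeight s a * triWeight s (k - a)) (triCorr s k) :=
    hasSum_sum_of_ne_finset_zero fun a ha => by rw [triWeight_eq_zero ha, zero_mul]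
  have h' := (Equiv.neg ℤ).hasSum_iff.2 h
  convert h' using 2 with a
  simp [triWeight_neg, add_comm]

theorem hasSum_sq_triWeight (s : ℕ) (k : ℤ) :
    HasSum (fun a => triWeight s (a + k) ^ 2) (triCorr s 0) := by
  have h := (Equiv.addRight k).hasSum_iff.2 (hasSum_triCorr s 0)
  convert h using 2 with a
  simp [sq]

theorem hasSum_sq_triWeight_sub (s : ℕ) (k : ℤ) :
    HasSum (fun a => (triWeight s (a + k) - triWeight s a) ^ 2)
      (2 * (triCorr s 0 - triCorr s k)) := by
  have h := ((hasSum_sq_triWeight s k).add (hasSum_sq_triWeight s 0)).sub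
    ((hasSum_triCorr s k).mul_left 2)
  simp only [add_zero] at h
  rw [show 2 * (triCorr s 0 - triCorr s k) = triCorr s 0 + triCorr s 0 - 2 * triCorr s k by ring]
  refine h.congr_fun fun a => ?_
  ring

theorem triCorr_neg (s : ℕ) (k : ℤ) : triCorr s (-k) = triCorr s k := by
  refine (hasSum_triCorr s (-k)).unique ?_
  have h := (Equiv.neg ℤ).hasSum_iff.2 (hasSum_triCorr s k)
  convert h using 2 with a
  simp only [Function.comp, Equiv.neg_apply, triWeight_neg]
  rw [← triWeight_neg s (-a + k)]
  congr 2
  ring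

theorem triCorr_le (s : ℕ) (k : ℤ) : triCorr s k ≤ triCorr s 0 := by
  have := (hasSum_sq_triWeight_sub s k).nonneg fun a => sq_nonneg _
  linarith

theorem sub_triCorr_one_le (s : ℕ) : 2 * (triCorr s 0 - triCorr s 1) ≤ 2 * s := by
  have hind : HasSum (fun a : ℤ => if a ∈ Finset.Ico (-(s : ℤ)) s then (1 : ℝ) else 0)
      (∑ a ∈ Finset.Ico (-(s : ℤ)) s, if a ∈ Finset.Ico (-(s : ℤ)) s then (1 : ℝ) else 0) :=
    hasSum_sum_of_ne_finset_zero fun a ha => if_neg ha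
  have hcard : (∑ a ∈ Finset.Ico (-(s : ℤ)) s,
      if a ∈ Finset.Ico (-(s : ℤ)) s then (1 : ℝ) else 0) = 2 * s := by
    rw [Finset.sum_congr rfl fun a ha => if_pos ha, Finset.sum_const, Int.card_Ico]
    have h : ((s : ℤ) - -(s : ℤ)).toNat = 2 * s := by omega
    rw [h]
    simp
  refine hasSum_le (fun a => ?_) (hasSum_sq_triWeight_sub s 1) (hcard ▸ hind)
  split_ifs with ha
  · have h : |triWeight s (a + 1) - triWeight s a| ≤ 1 := by
      refine (abs_max_sub_max_le_abs _ _ _).trans ?_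
      rw [sub_sub_sub_cancel_left, abs_sub_comm]
      refine (abs_abs_sub_abs_le _ _).trans ?_
      simp
    simpa using (sq_le_one_iff_abs_le_one _).2 h
  · have hz {b : ℤ} (hb : (s : ℤ) ≤ |b|) : triWeight s b = 0 := by
      have hb' : (s : ℝ) ≤ |(b : ℝ)| := by exact_mod_cast hb
      exact max_eq_right (by linarith)
    rw [Finset.mem_Ico] at ha
    rw [hz (by grind), hz (by grind)]
    simp

theorem sub_triCorr_natCast_le (s k : ℕ) :
    triCorr s 0 - triCorr s k ≤ s * (k : ℝ) ^ 2 := by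
  have htel (a : ℤ) : triWeight s (a + k) - triWeight s a
      = ∑ j ∈ Finset.range k, (triWeight s (a + j + 1) - triWeight s (a + j)) := by
    have h := Finset.sum_range_sub (fun j : ℕ => triWeight s (a + j)) k
    simp only [Nat.cast_add, Nat.cast_one, ← add_assoc, Nat.cast_zero, add_zero] at h
    exact h.symm
  have hshift (j : ℕ) : HasSum
      (fun a : ℤ => (triWeight s (a + j + 1) - triWeight s (a + j)) ^ 2)
      (2 * (triCorr s 0 - triCorr s 1)) :=
    (Equiv.addRight (j : ℤ)).hasSum_iff.2 (hasSum_sq_triWeight_sub s 1)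
  have hle := hasSum_le (fun a : ℤ => by
      rw [htel a]
      exact sq_sum_le_card_mul_sum_sq) (hasSum_sq_triWeight_sub s k)
    ((hasSum_sum fun j (_ : j ∈ Finset.range k) => hshift j).mul_left
      ((Finset.range k).card : ℝ))
  simp only [Finset.sum_const, Finset.card_range, nsmul_eq_mul] at hle
  have h1 := mul_le_mul_of_nonneg_left (sub_triCorr_one_le s) (sq_nonneg (k : ℝ))
  nlinarith

theorem sub_triCorr_le {s r : ℕ} {k : ℤ} (hk : |k| ≤ (2 * r : ℕ)) :
    triCorr s 0 - triCorr s k ≤ 4 * s * (r : ℝ) ^ 2 := by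
  have habs : triCorr s k = triCorr s k.natAbs := by
    rcases Int.natAbs_eq k with h | h
    · rw [← h]
    · conv_lhs => rw [h, triCorr_neg]
  have hk' : (k.natAbs : ℝ) ≤ 2 * r := by
    have : k.natAbs ≤ 2 * r := by grind
    exact_mod_cast this
  have h1 : (k.natAbs : ℝ) ^ 2 ≤ (2 * r) ^ 2 := by gcongr
  have h2 := mul_le_mul_of_nonneg_left h1 (Nat.cast_nonneg (α := ℝ) s)
  have h3 := sub_triCorr_natCast_le s k.natAbs
  rw [habs]
  linarith

theorem triCorr_zero_pos {s : ℕ} (hs : 0 < s) : 0 < triCorr s 0 := by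
  rw [triCorr_zero]
  positivity

/-- The normalized autocorrelation stays close to `1` at low frequencies. -/
theorem le_triCorr_div {s r : ℕ} (hs : 0 < s) {k : ℤ} (hk : |k| ≤ (2 * r : ℕ)) :
    1 - 6 * (r : ℝ) ^ 2 / (s : ℝ) ^ 2 ≤ triCorr s k / triCorr s 0 := by
  have hA := triCorr_zero_pos hs
  have h := sub_triCorr_le (s := s) hk
  have hs' : (0 : ℝ) < s := by exact_mod_cast hs
  have h2 : 4 * s * (r : ℝ) ^ 2 ≤ 6 * (r : ℝ) ^ 2 / (s : ℝ) ^ 2 * triCorr s 0 := by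
    rw [triCorr_zero, div_mul_eq_mul_div, le_div_iff₀ (by positivity)]
    have : 0 ≤ (r : ℝ) ^ 2 * s := by positivity
    linarith
  rw [le_div_iff₀ hA]
  linarith

/-- The trigonometric polynomial whose Fourier coefficients are the triangular weights. -/
noncomputable def triKernel (s : ℕ) (t : ℝ) : ℝ :=
  (∑ a ∈ Finset.Icc (-(s : ℤ)) s, (triWeight s a : ℂ) * circleChar a t).re

theorem ofReal_triKernel (s : ℕ) (t : ℝ) :
    (triKernel s t : ℂ)
      = ∑ a ∈ Finset.Icc (-(s : ℤ)) s, (triWeight s a : ℂ) * circleChar a t := by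
  refine Complex.conj_eq_iff_re.1 ?_
  simp only [map_sum, map_mul, Complex.conj_ofReal, conj_circleChar]
  refine Finset.sum_equiv (Equiv.neg ℤ) (fun a => ?_) fun a _ => ?_
  · simp only [Finset.mem_Icc, Equiv.neg_apply]
    omega
  · simp [triWeight_neg]

/-- On the grid, convolution with the squared kernel acts diagonally on characters. -/
theorem sum_circleChar_mul_triKernel_sq {s d N : ℕ} (hN : d + 2 * s < N) {k : ℤ}
    (hk : |k| ≤ d) (x : ℝ) :
    ∑ j : Fin N, circleChar k (j / N : ℝ) * (triKernel s (x - j / N) : ℂ) ^ 2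
      = N * triCorr s k * circleChar k x := by
  have hexp (j : Fin N) : circleChar k (j / N : ℝ) * (triKernel s (x - j / N) : ℂ) ^ 2
      = ∑ a ∈ Finset.Icc (-(s : ℤ)) s, ∑ b ∈ Finset.Icc (-(s : ℤ)) s,
        (triWeight s a * triWeight s b * circleChar (a + b) x : ℂ)
          * circleChar (k - (a + b)) (j / N : ℝ) := by
    rw [ofReal_triKernel, sq, Finset.sum_mul_sum, Finset.mul_sum]
    refine Finset.sum_congr rfl fun a _ => ?_
    rw [Finset.mul_sum]
    refine Finset.sum_congr rfl fun b _ => ?_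
    rw [circleChar_sub_right, circleChar_sub_right, sub_eq_add_neg, neg_add, circleChar_add,
      circleChar_add, circleChar_add]
    ring
  rw [Finset.sum_congr rfl fun j _ => hexp j, Finset.sum_comm, triCorr]
  push_cast
  rw [Finset.mul_sum, Finset.sum_mul]
  refine Finset.sum_congr rfl fun a ha => ?_
  rw [Finset.sum_comm]
  have hsum (b : ℤ) (hb : b ∈ Finset.Icc (-(s : ℤ)) s) :
      ∑ j : Fin N, (triWeight s a * triWeight s b * circleChar (a + b) x : ℂ)
          * circleChar (k - (a + b)) (j / N : ℝ)
        = if b = k - a then (N * (triWeight s a * triWeight s b) * circleChar k x : ℂ)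
          else 0 := by
    rw [← Finset.mul_sum, sum_circleChar_grid (by rw [Finset.mem_Icc] at ha hb; grind)]
    by_cases h : b = k - a
    · rw [if_pos (by omega), if_pos h, show a + b = k by omega]
      ring
    · rw [if_neg (by omega), if_neg h, mul_zero]
  rw [Finset.sum_congr rfl hsum, Finset.sum_ite_eq']
  split_ifs with h
  · rfl
  · simp [triWeight_eq_zero h]

/-- The tensor-product kernel on `ℝⁿ`. -/
noncomputable def prodTriKernel {n : ℕ} (s : ℕ) (z : Fin n → ℝ) : ℝ :=
  ∏ i, triKernel s (z i)

/-- The points of the uniform grid of mesh `1 / N` in the unit cube. -/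
noncomputable def gridPoint {n N : ℕ} (j : Fin n → Fin N) : Fin n → ℝ :=
  fun i => (j i : ℝ) / N

theorem gridPoint_mem {n N : ℕ} (j : Fin n → Fin N) :
    gridPoint j ∈ Set.Icc (0 : Fin n → ℝ) 1 := by
  refine ⟨fun i => by simp only [gridPoint, Pi.zero_apply]; positivity, fun i => ?_⟩
  exact div_le_one_of_le₀ (Nat.cast_le.2 (j i).is_lt.le) (Nat.cast_nonneg N)

theorem sum_trigChar_mul_prodTriKernel_sq {n s d N : ℕ} (hN : d + 2 * s < N)
    {k : Fin n → ℤ} (hk : ∀ i, |k i| ≤ d) (x : Fin n → ℝ) :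
    ∑ j : Fin n → Fin N,
        trigChar k (gridPoint j) * (prodTriKernel s (x - gridPoint j) : ℂ) ^ 2
      = N ^ n * (∏ i, triCorr s (k i) : ℝ) * trigChar k x := by
  have h := Finset.prod_univ_sum (fun _ : Fin n => (Finset.univ : Finset (Fin N)))
    fun i j => circleChar (k i) (j / N : ℝ) * (triKernel s (x i - j / N) : ℂ) ^ 2
  rw [Fintype.piFinset_univ] at h
  simp only [trigChar_eq_prod, prodTriKernel, gridPoint, Pi.sub_apply, Complex.ofReal_prod,
    ← Finset.prod_pow, ← Finset.prod_mul_distrib]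
  rw [← h, Finset.prod_congr rfl fun i _ => sum_circleChar_mul_triKernel_sq hN (hk i) (x i)]
  simp [Finset.prod_mul_distrib]

theorem isTrigPoly_const_mul_prodTriKernel_sub {n : ℕ} (s : ℕ) (C : ℝ) (y : Fin n → ℝ) :
    IsTrigPoly s fun x => C * prodTriKernel s (x - y) := by
  refine ⟨Fintype.piFinset fun _ => Finset.Icc (-(s : ℤ)) s,
    fun a => C * ∏ i, (triWeight s (a i) * circleChar (-a i) (y i) : ℂ), fun k hk i => ?_,
    fun z => ?_⟩
  · exact abs_le.2 (Finset.mem_Icc.1 (Fintype.mem_piFinset.1 hk i))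
  · simp only [prodTriKernel, Complex.ofReal_mul, Complex.ofReal_prod, ofReal_triKernel]
    rw [Finset.prod_univ_sum, Finset.mul_sum]
    refine Finset.sum_congr rfl fun a _ => ?_
    rw [trigChar_eq_prod, mul_assoc, ← Finset.prod_mul_distrib]
    congr 1
    refine Finset.prod_congr rfl fun i _ => ?_
    rw [Pi.sub_apply, circleChar_sub_right]
    ring

theorem fCoeff_sub_const {m : ℕ} {g : (Fin m → ℝ) → ℝ} {S : Finset (Fin m → ℤ)}
    {c : (Fin m → ℤ) → ℂ} (hg : ∀ z, (g z : ℂ) = ∑ k ∈ S, c k * trigChar k z) (b : ℝ)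
    (l : Fin m → ℤ) :
    fCoeff (fun x => g x - b) l
      = (if l ∈ S then c l else 0) - if l = 0 then (b : ℂ) else 0 := by
  have hint (k : Fin m → ℤ) (C : ℂ) :
      IntegrableOn (fun z => C * trigChar k z) (Set.Icc (0 : Fin m → ℝ) 1) :=
    ((continuous_trigChar k).const_mul C).continuousOn.integrableOn_compact isCompact_Icc
  have hexp (z : Fin m → ℝ) : ((g z - b : ℝ) : ℂ) * trigChar (-l) z
      = ∑ k ∈ S, c k * trigChar (k + -l) z - b * trigChar (-l) z := by
    rw [Complex.ofReal_sub, hg, sub_mul, Finset.sum_mul]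
    simp only [trigChar_add, mul_assoc]
  simp only [fCoeff, hexp]
  rw [integral_sub (integrable_finsetSum _ fun k _ => hint _ _) (hint _ _),
    integral_finsetSum _ fun k _ => hint _ _]
  simp only [integral_const_mul, setIntegral_trigChar, add_neg_eq_zero, neg_eq_zero, mul_ite,
    mul_one, mul_zero, Finset.sum_ite_eq']

theorem sum_norm_coeff_le_Fnorm {m : ℕ} {g : (Fin m → ℝ) → ℝ} {S : Finset (Fin m → ℤ)}
    {c : (Fin m → ℤ) → ℂ} (hg : ∀ z, (g z : ℂ) = ∑ k ∈ S, c k * trigChar k z) (b : ℝ) :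
    ∑ k ∈ S.erase 0, ‖c k‖ ≤ Fnorm fun x => g x - b := by
  have hsum : Summable fun l => ‖fCoeff (fun x => g x - b) l‖ := by
    refine summable_of_ne_finset_zero (s := insert 0 S) fun l hl => ?_
    rw [Finset.mem_insert, not_or] at hl
    rw [fCoeff_sub_const hg, if_neg hl.1, if_neg hl.2]
    simp
  refine le_trans (le_of_eq (Finset.sum_congr rfl fun k hk => ?_))
    (hsum.sum_le_tsum (S.erase 0) fun _ _ => norm_nonneg _)
  rw [Finset.mem_erase] at hk
  rw [fCoeff_sub_const hg, if_pos hk.2, if_neg hk.1, sub_zero]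

theorem abs_inv_prod_triCorr_div_sub_one_le {n r s : ℕ} (hs : 6 * r ^ 2 < s ^ 2)
    {k : Fin n → ℤ} (hk : ∀ i, |k i| ≤ (2 * r : ℕ)) :
    0 < ∏ i, triCorr s (k i) / triCorr s 0 ∧
      |(∏ i, triCorr s (k i) / triCorr s 0)⁻¹ - 1|
        ≤ (1 - 6 * (r : ℝ) ^ 2 / (s : ℝ) ^ 2) ^ (-(n : ℤ)) - 1 := by
  have hs0 : 0 < s := Nat.pos_of_ne_zero fun h => by simp [h] at hs
  have hρ : 0 < 1 - 6 * (r : ℝ) ^ 2 / (s : ℝ) ^ 2 := by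
    rw [sub_pos, div_lt_one (by positivity)]
    exact_mod_cast hs
  have hlow : (1 - 6 * (r : ℝ) ^ 2 / (s : ℝ) ^ 2) ^ n ≤ ∏ i, triCorr s (k i) / triCorr s 0 := by
    have h := Finset.prod_le_prod (s := Finset.univ) (fun (_ : Fin n) _ => hρ.le)
      fun i _ => le_triCorr_div hs0 (hk i)
    simpa using h
  have hpos : 0 < ∏ i, triCorr s (k i) / triCorr s 0 := (pow_pos hρ n).trans_le hlow
  have hup : ∏ i, triCorr s (k i) / triCorr s 0 ≤ 1 :=
    Finset.prod_le_one (fun i _ => hρ.le.trans (le_triCorr_div hs0 (hk i)))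
      fun i _ => div_le_one_of_le₀ (triCorr_le s _) (triCorr_zero_pos hs0).le
  refine ⟨hpos, ?_⟩
  rw [abs_of_nonneg (sub_nonneg.2 ((one_le_inv₀ hpos).2 hup)), zpow_neg, zpow_natCast]
  gcongr

/-- quantitative SOS lower bound for a single trigonometric polynomial.
Let `g : ℝⁿ → ℝ` be a real trigonometric polynomial of degree `≤ 2r`. For every integer `s`
with `s² > 6r²` there exist `c ∈ ℝ` and trigonometric polynomials `h₁, …, h_K` of degree
`≤ s` with `g(x) − c = Σ_k h_k(x)²` for all `x` and
`(min_{x ∈ [0,1]ⁿ} g(x)) − c ≤ ‖g − ḡ‖_F · [(1 − 6r²/s²)^{−n} − 1]`, where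
`ḡ = ∫_{[0,1]^n} g`. -/
theorem sos_lower_bound_gap (n r : ℕ)
    (g : (Fin n → ℝ) → ℝ) (hg : IsTrigPoly (2 * r) g)
    (s : ℕ) (hs : 6 * r ^ 2 < s ^ 2) :
    ∃ (c : ℝ) (K : ℕ) (h : Fin K → (Fin n → ℝ) → ℝ),
      (∀ k, IsTrigPoly s (h k)) ∧
      (∀ x, g x - c = ∑ k, (h k x) ^ 2) ∧
      sInf (g '' Set.Icc (0 : Fin n → ℝ) 1) - c ≤
        Fnorm (fun x => g x - ∫ y in Set.Icc (0 : Fin n → ℝ) 1, g y) *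
          ((1 - 6 * (r : ℝ) ^ 2 / (s : ℝ) ^ 2) ^ (-(n : ℤ)) - 1) := by
  obtain ⟨S, c, hS, hgc⟩ := hg
  set b : ℝ := ∫ y in Set.Icc (0 : Fin n → ℝ) 1, g y
  set δ : ℝ := (1 - 6 * (r : ℝ) ^ 2 / (s : ℝ) ^ 2) ^ (-(n : ℤ)) - 1
  set P : (Fin n → ℤ) → ℝ := fun k => ∏ i, triCorr s (k i) / triCorr s 0
  have hs0 : 0 < s := Nat.pos_of_ne_zero fun h => by simp [h] at hs
  have hA := triCorr_zero_pos hs0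
  have hP (k) (hk : k ∈ S) : 0 < P k ∧ |(P k)⁻¹ - 1| ≤ δ :=
    abs_inv_prod_triCorr_div_sub_one_le hs (hS k hk)
  have hP0 : P 0 = 1 := by simp [P, hA.ne']
  have hδ : 0 ≤ δ := by
    have h := (abs_inv_prod_triCorr_div_sub_one_le (n := n) (k := 0) hs (by simp)).2
    exact (abs_nonneg _).trans h
  set N : ℕ := 2 * r + 2 * s + 1 with hN
  set M : ℝ := N ^ n * triCorr s 0 ^ n
  have hM : 0 < M := by positivity
  have hconv (k : Fin n → ℤ) (hk : ∀ i, |k i| ≤ (2 * r : ℕ)) (x : Fin n → ℝ) :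
      ∑ j : Fin n → Fin N,
        trigChar k (gridPoint j) * (prodTriKernel s (x - gridPoint j) : ℂ) ^ 2
      = M * P k * trigChar k x := by
    rw [sum_trigChar_mul_prodTriKernel_sq (d := 2 * r) (by omega) hk]
    have h : M * P k = N ^ n * ∏ i, triCorr s (k i) := by
      simp only [M, P, Finset.prod_div_distrib, Finset.prod_const, Finset.card_univ,
        Fintype.card_fin]
      field_simp
    rw [← Complex.ofReal_mul M, h]
    push_cast
    rfl
  set u : (Fin n → ℝ) → ℂ := fun y => ∑ k ∈ S, (c k * (P k : ℂ)⁻¹) * trigChar k y with hu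
  have huconv (x : Fin n → ℝ) :
      ∑ j : Fin n → Fin N, u (gridPoint j) * (prodTriKernel s (x - gridPoint j) : ℂ) ^ 2
        = M * g x := by
    simp only [hu, Finset.sum_mul]
    rw [Finset.sum_comm, hgc, Finset.mul_sum]
    refine Finset.sum_congr rfl fun k hk => ?_
    simp only [mul_assoc (c k * (P k : ℂ)⁻¹)]
    rw [← Finset.mul_sum, hconv k (hS k hk)]
    have : (P k : ℂ) ≠ 0 := by exact_mod_cast (hP k hk).1.ne'
    field_simp
  have hone (x : Fin n → ℝ) :
      ∑ j : Fin n → Fin N, prodTriKernel s (x - gridPoint j) ^ 2 = M := by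
    have h := hconv 0 (by simp) x
    simp only [trigChar_zero, hP0, one_mul, Complex.ofReal_one, mul_one] at h
    exact_mod_cast h
  have hre (x : Fin n → ℝ) :
      ∑ j : Fin n → Fin N, (u (gridPoint j)).re * prodTriKernel s (x - gridPoint j) ^ 2
        = M * g x := by
    have h := congrArg Complex.re (huconv x)
    rw [Complex.re_sum, ← Complex.ofReal_mul, Complex.ofReal_re] at h
    rw [← h]
    refine Finset.sum_congr rfl fun j _ => ?_
    rw [← Complex.ofReal_pow, Complex.re_mul_ofReal]
  have hbdd : BddBelow (g '' Set.Icc (0 : Fin n → ℝ) 1) := by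
    refine ⟨-∑ k ∈ S, ‖c k‖, ?_⟩
    rintro _ ⟨z, -, rfl⟩
    have h : |g z| ≤ ∑ k ∈ S, ‖c k‖ := by
      rw [← Real.norm_eq_abs, ← Complex.norm_real, hgc]
      refine (norm_sum_le _ _).trans (le_of_eq (Finset.sum_congr rfl fun k _ => ?_))
      rw [norm_mul, norm_trigChar, mul_one]
    exact neg_le_of_abs_le h
  have hdiff (y : Fin n → ℝ) :
      g y - Fnorm (fun x => g x - b) * δ ≤ (u y).re := by
    have hsub : u y - g y = ∑ k ∈ S.erase 0, c k * (((P k)⁻¹ - 1 : ℝ) : ℂ) * trigChar k y := by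
      rw [hgc, hu, ← Finset.sum_sub_distrib]
      rw [Finset.sum_erase _ (by simp [hP0])]
      refine Finset.sum_congr rfl fun k _ => ?_
      push_cast
      ring
    have hnorm : ‖u y - g y‖ ≤ Fnorm (fun x => g x - b) * δ := by
      rw [hsub]
      refine (norm_sum_le _ _).trans ?_
      refine le_trans ?_ (mul_le_mul_of_nonneg_right (sum_norm_coeff_le_Fnorm hgc b) hδ)
      rw [Finset.sum_mul]
      refine Finset.sum_le_sum fun k hk => ?_
      rw [norm_mul, norm_mul, norm_trigChar, mul_one, Complex.norm_real, Real.norm_eq_abs]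
      exact mul_le_mul_of_nonneg_left (hP k (Finset.mem_of_mem_erase hk)).2 (norm_nonneg _)
    have h := neg_le_of_abs_le ((Complex.abs_re_le_norm _).trans hnorm)
    rw [Complex.sub_re, Complex.ofReal_re] at h
    linarith
  set C : ℝ := sInf (g '' Set.Icc (0 : Fin n → ℝ) 1) - Fnorm (fun x => g x - b) * δ with hC
  have hnonneg (j : Fin n → Fin N) : 0 ≤ ((u (gridPoint j)).re - C) / M := by
    have h1 := csInf_le hbdd (Set.mem_image_of_mem g (gridPoint_mem j))
    have h2 := hdiff (gridPoint j)
    exact div_nonneg (by linarith) hM.le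
  let e := (Fintype.equivFin (Fin n → Fin N)).symm
  refine ⟨C, Fintype.card (Fin n → Fin N),
    fun k x => √(((u (gridPoint (e k))).re - C) / M) * prodTriKernel s (x - gridPoint (e k)),
    fun k => isTrigPoly_const_mul_prodTriKernel_sub s _ _, fun x => ?_, by linarith⟩
  rw [e.sum_comp fun j =>
    (√(((u (gridPoint j)).re - C) / M) * prodTriKernel s (x - gridPoint j)) ^ 2]
  simp only [mul_pow, Real.sq_sqrt (hnonneg _), div_mul_eq_mul_div, sub_mul]
  rw [← Finset.sum_div, Finset.sum_sub_distrib, ← Finset.mul_sum, hre, hone]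
  field_simp
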